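/- Let A be a DGA over ℚ and let (α, γ) be a cochain choice. Then the restriction of the map αγ² : H² ⊗ Λ²E → A⁸ to D takes values in the subspace Z⁸ of closed elements. -/

import Mathlib

/-!
Common constructions: for a `ℚ`-vector space `V`, the symmetric powers
`P²V, P³V, P⁴V, P⁵V` (as `SqM V`, `CubM V`, `QuarM V`, `QuinM V`), built as iterated
quotients of tensor products, with the multiplication maps between them; the exterior
square `Λ²W` (as `AltM W`) with the wedge map; and the 5-linear map `⋆` (as `star5`).
-/

open TensorProduct

noncomputable section

variable (V W : Type) [AddCommGroup V] [Module ℚ V] [AddCommGroup W] [Module ℚ W]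

/-- The relations defining the symmetric square `P²V` as a quotient of `V ⊗ V`. -/
def sqRel : Submodule ℚ (V ⊗[ℚ] V) :=
  Submodule.span ℚ {z | ∃ x y : V, z = x ⊗ₜ[ℚ] y - y ⊗ₜ[ℚ] x}

/-- The symmetric square `P²V`. -/
abbrev SqM : Type := (V ⊗[ℚ] V) ⧸ sqRel V

/-- The product `V × V → P²V`, `(x, y) ↦ xy`. -/
def sqm : V →ₗ[ℚ] V →ₗ[ℚ] SqM V :=
  (TensorProduct.mk ℚ V V).compr₂ (sqRel V).mkQ

/-- The relations presenting the symmetric cube `P³V` as a quotient of `V ⊗ P²V`. -/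
def cubRel : Submodule ℚ (V ⊗[ℚ] SqM V) :=
  Submodule.span ℚ {z | ∃ x y w : V, z = x ⊗ₜ[ℚ] sqm V y w - y ⊗ₜ[ℚ] sqm V x w}

/-- The symmetric cube `P³V`. -/
abbrev CubM : Type := (V ⊗[ℚ] SqM V) ⧸ cubRel V

/-- The product `V × P²V → P³V`. -/
def mulC : V →ₗ[ℚ] SqM V →ₗ[ℚ] CubM V :=
  (TensorProduct.mk ℚ V (SqM V)).compr₂ (cubRel V).mkQ

/-- The relations presenting `P⁴V` as a quotient of `V ⊗ P³V`. -/
def quarRel : Submodule ℚ (V ⊗[ℚ] CubM V) :=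
  Submodule.span ℚ {z | ∃ (x y : V) (u : SqM V), z = x ⊗ₜ[ℚ] mulC V y u - y ⊗ₜ[ℚ] mulC V x u}

/-- The symmetric fourth power `P⁴V`. -/
abbrev QuarM : Type := (V ⊗[ℚ] CubM V) ⧸ quarRel V

/-- The product `V × P³V → P⁴V`. -/
def mulQ : V →ₗ[ℚ] CubM V →ₗ[ℚ] QuarM V :=
  (TensorProduct.mk ℚ V (CubM V)).compr₂ (quarRel V).mkQ

/-- The relations presenting `P⁵V` as a quotient of `V ⊗ P⁴V`. -/
def quinRel : Submodule ℚ (V ⊗[ℚ] QuarM V) :=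
  Submodule.span ℚ {z | ∃ (x y : V) (c : CubM V), z = x ⊗ₜ[ℚ] mulQ V y c - y ⊗ₜ[ℚ] mulQ V x c}

/-- The symmetric fifth power `P⁵V`. -/
abbrev QuinM : Type := (V ⊗[ℚ] QuarM V) ⧸ quinRel V

/-- The product `V × P⁴V → P⁵V`. -/
def mulQn : V →ₗ[ℚ] QuarM V →ₗ[ℚ] QuinM V :=
  (TensorProduct.mk ℚ V (QuarM V)).compr₂ (quinRel V).mkQ

/-- The relations defining the exterior square `Λ²W` as a quotient of `W ⊗ W`. -/
def altRel2 : Submodule ℚ (W ⊗[ℚ] W) :=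
  Submodule.span ℚ {z | ∃ x : W, z = x ⊗ₜ[ℚ] x}

/-- The exterior square `Λ²W`. -/
abbrev AltM : Type := (W ⊗[ℚ] W) ⧸ altRel2 W

/-- The wedge product `W × W → Λ²W`. -/
def wdg : W →ₗ[ℚ] W →ₗ[ℚ] AltM W :=
  (TensorProduct.mk ℚ W W).compr₂ (altRel2 W).mkQ

/-- The element `⋆(x₁,…,x₅) = Σ_{i ∈ ℤ/5} xᵢ ⊗ (x_{i+1}x_{i+2} ∧ x_{i+3}x_{i+4})`
of `V ⊗ Λ²(P²V)`. -/
def star5 (x₁ x₂ x₃ x₄ x₅ : V) : V ⊗[ℚ] AltM (SqM V) :=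
    x₁ ⊗ₜ[ℚ] wdg (SqM V) (sqm V x₂ x₃) (sqm V x₄ x₅)
  + x₂ ⊗ₜ[ℚ] wdg (SqM V) (sqm V x₃ x₄) (sqm V x₅ x₁)
  + x₃ ⊗ₜ[ℚ] wdg (SqM V) (sqm V x₄ x₅) (sqm V x₁ x₂)
  + x₄ ⊗ₜ[ℚ] wdg (SqM V) (sqm V x₅ x₁) (sqm V x₂ x₃)
  + x₅ ⊗ₜ[ℚ] wdg (SqM V) (sqm V x₁ x₂) (sqm V x₃ x₄)

/-- A differential graded algebra (DGA) over `ℚ`: an `ℕ`-graded, graded-commutative,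
associative unital `ℚ`-algebra with a degree `+1` differential satisfying `d ∘ d = 0`
and the graded Leibniz rule. -/
structure DGA where
  /-- The underlying type. -/
  carrier : Type
  [ringStr : Ring carrier]
  [algStr : Algebra ℚ carrier]
  /-- The grading `A = ⊕ᵢ Aⁱ`. -/
  grading : ℕ → Submodule ℚ carrier
  one_mem : (1 : carrier) ∈ grading 0
  mul_mem : ∀ {i j : ℕ} {a b : carrier}, a ∈ grading i → b ∈ grading j → a * b ∈ grading (i + j)
  /-- The grading really is a direct sum decomposition. -/
  internal : DirectSum.IsInternal grading
  /-- Graded commutativity. -/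
  gcomm : ∀ {i j : ℕ} {a b : carrier}, a ∈ grading i → b ∈ grading j →
    a * b = ((-1 : ℚ) ^ (i * j)) • (b * a)
  /-- The differential. -/
  d : carrier →ₗ[ℚ] carrier
  d_mem : ∀ {i : ℕ} {a : carrier}, a ∈ grading i → d a ∈ grading (i + 1)
  d_d : ∀ a : carrier, d (d a) = 0
  /-- The graded Leibniz rule. -/
  leibniz : ∀ {i : ℕ} {a : carrier} (b : carrier), a ∈ grading i →
    d (a * b) = d a * b + ((-1 : ℚ) ^ i) • (a * d b)

attribute [instance] DGA.ringStr DGA.algStr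

namespace DGA

variable (A : DGA)

/-- The closed elements of degree `i`. -/
def Z (i : ℕ) : Submodule ℚ A.carrier := A.grading i ⊓ LinearMap.ker A.d

/-- The exact elements of degree `i`, as a submodule of the closed ones. -/
def Bdry (i : ℕ) : Submodule ℚ (A.Z i) :=
  Submodule.comap (A.Z i).subtype (Submodule.map A.d (A.grading (i - 1)))

/-- Degree `i` cohomology of the DGA. -/
abbrev H (i : ℕ) : Type := A.Z i ⧸ A.Bdry i

/-- The projection from closed elements to cohomology classes. -/
def pr (i : ℕ) : A.Z i →ₗ[ℚ] A.H i := (A.Bdry i).mkQ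

end DGA

/-!
On a generator, graded commutativity and the Leibniz rule give
`d(α(q)γ(e)γ(f)) = α(q)(α²(e)γ(f) - α²(f)γ(e))`. The right-hand side is the image of
`m(q ⊗ (e ∧ f)) = qe ⊗ f - qf ⊗ e` under `c ⊗ v ↦ α³(c) γ'(v)`, where `α³ : P³H² → A⁶` is induced
by `α` and `γ'` extends `γ` linearly to `P²H²`. So `d ∘ αγ²` factors through `m` and vanishes on
its kernel.
-/

section Powers

variable {V W}

lemma sqm_comm (x y : V) : sqm V x y = sqm V y x :=
  (Submodule.Quotient.eq _).2 (Submodule.subset_span ⟨x, y, rfl⟩)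

/-- The universal property of `P³V`: the linear map on `P³V` induced by a bilinear map on
`V × P²V` that is symmetric in the three factors. Only the exchange of the first two factors is
required, since `P²V` is already symmetric. -/
def CubM.lift {M : Type*} [AddCommGroup M] [Module ℚ M] (b : V →ₗ[ℚ] SqM V →ₗ[ℚ] M)
    (hb : ∀ x y w, b x (sqm V y w) = b y (sqm V x w)) : CubM V →ₗ[ℚ] M :=
  (cubRel V).liftQ (TensorProduct.lift b) <| Submodule.span_le.2 <| by
    rintro _ ⟨x, y, w, rfl⟩
    simp [hb x y w]

lemma CubM.lift_mulC {M : Type*} [AddCommGroup M] [Module ℚ M] (b : V →ₗ[ℚ] SqM V →ₗ[ℚ] M)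
    (hb : ∀ x y w, b x (sqm V y w) = b y (sqm V x w)) (x : V) (u : SqM V) :
    CubM.lift b hb (mulC V x u) = b x u :=
  rfl

lemma exists_map_mulC_tmul_eq {B : Type*} [Ring B] [Algebra ℚ B] (f : V →ₗ[ℚ] B)
    (fsq : SqM V →ₗ[ℚ] B) (hfsq : ∀ x y, fsq (sqm V x y) = f x * f y)
    (E : Submodule ℚ (SqM V)) (g : E →ₗ[ℚ] B) :
    ∃ Ψ : CubM V ⊗[ℚ] SqM V →ₗ[ℚ] B,
      ∀ (q : V) (u : SqM V) (e : E), Ψ (mulC V q u ⊗ₜ[ℚ] (e : SqM V)) = f q * fsq u * g e := by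
  have f_comm (x y : V) : f x * f y = f y * f x := by rw [← hfsq, sqm_comm, hfsq]
  let fcub : CubM V →ₗ[ℚ] B := CubM.lift ((LinearMap.mul ℚ B).compl₁₂ f fsq) fun x y w => by
    simp only [LinearMap.compl₁₂_apply, LinearMap.mul_apply', hfsq, ← mul_assoc, f_comm x y]
  obtain ⟨g', hg'⟩ := LinearMap.exists_extend g
  refine ⟨LinearMap.mul' ℚ B ∘ₗ TensorProduct.map fcub g', fun q u e => ?_⟩
  have g'_apply : g' e = g e := LinearMap.congr_fun hg' e
  simp only [LinearMap.comp_apply, TensorProduct.map_tmul, LinearMap.mul'_apply, fcub,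
    CubM.lift_mulC, LinearMap.compl₁₂_apply, LinearMap.mul_apply', g'_apply]

lemma span_tmul_wdg_eq_top :
    Submodule.span ℚ {t | ∃ (q : V) (e e' : W), q ⊗ₜ[ℚ] wdg W e e' = t} = ⊤ := by
  rw [eq_top_iff, ← TensorProduct.span_tmul_eq_top, Submodule.span_le]
  rintro _ ⟨q, z, rfl⟩
  obtain ⟨z, rfl⟩ := (altRel2 W).mkQ_surjective z
  induction z using TensorProduct.induction_on with
  | zero => simp
  | tmul e e' => exact Submodule.subset_span ⟨q, e, e', rfl⟩
  | add z z' hz hz' =>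
    rw [map_add, TensorProduct.tmul_add]
    exact add_mem hz hz'

end Powers

namespace DGA

variable {A : DGA} {i j : ℕ} {a b : A.carrier}

lemma d_mul_of_mem_Z (ha : a ∈ A.Z i) (c : A.carrier) :
    A.d (a * c) = (-1 : ℚ) ^ i • (a * A.d c) := by
  rw [A.leibniz c ha.1, LinearMap.mem_ker.1 ha.2, zero_mul, zero_add]

lemma mul_mem_Z (ha : a ∈ A.Z i) (hb : b ∈ A.Z j) : a * b ∈ A.Z (i + j) := by
  refine ⟨A.mul_mem ha.1 hb.1, LinearMap.mem_ker.2 ?_⟩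
  rw [d_mul_of_mem_Z ha, LinearMap.mem_ker.1 hb.2, mul_zero, smul_zero]

lemma d_mul_of_odd (hi : Odd i) (hj : Odd j) (ha : a ∈ A.grading i) (hb : b ∈ A.grading j) :
    A.d (a * b) = A.d a * b - A.d b * a := by
  have a_comm_db : a * A.d b = A.d b * a := by
    rw [A.gcomm ha (A.d_mem hb), (hj.add_one.mul_left i).neg_one_pow, one_smul]
  rw [A.leibniz b ha, hi.neg_one_pow, neg_one_smul, a_comm_db, sub_eq_add_neg]

end DGA

theorem alpha_gamma_sq_closed_on_D_general {V : Type} [AddCommGroup V] [Module ℚ V] (A : DGA)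
    {p k : ℕ} (hk : Odd k) (E : Submodule ℚ (SqM V))
    (m : (V ⊗[ℚ] AltM (SqM V)) →ₗ[ℚ] (CubM V ⊗[ℚ] SqM V))
    (hm : ∀ (q : V) (u v : SqM V),
      m (q ⊗ₜ[ℚ] wdg (SqM V) u v) = mulC V q u ⊗ₜ[ℚ] v - mulC V q v ⊗ₜ[ℚ] u)
    (ι : (V ⊗[ℚ] AltM E) →ₗ[ℚ] (V ⊗[ℚ] AltM (SqM V)))
    (hι : ∀ (q : V) (e e' : E), ι (q ⊗ₜ[ℚ] wdg E e e') = q ⊗ₜ[ℚ] wdg (SqM V) (e : SqM V) e')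
    (α : V →ₗ[ℚ] A.Z p) (αsq : SqM V →ₗ[ℚ] A.carrier)
    (hαsq : ∀ x y, αsq (sqm V x y) = (α x : A.carrier) * α y)
    (γ : E →ₗ[ℚ] A.carrier) (hγmem : ∀ e, γ e ∈ A.grading k) (hγd : ∀ e, A.d (γ e) = αsq e)
    (Φ : (V ⊗[ℚ] AltM E) →ₗ[ℚ] A.carrier)
    (hΦ : ∀ (q : V) (e e' : E), Φ (q ⊗ₜ[ℚ] wdg E e e') = (α q : A.carrier) * (γ e * γ e'))
    (t : V ⊗[ℚ] AltM E) (ht : m (ι t) = 0) : Φ t ∈ A.Z (p + (k + k)) := by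
  have Φ_mem : ⊤ ≤ (A.grading (p + (k + k))).comap Φ := by
    rw [← span_tmul_wdg_eq_top, Submodule.span_le]
    rintro _ ⟨q, e, e', rfl⟩
    simpa only [SetLike.mem_coe, Submodule.mem_comap, hΦ] using
      A.mul_mem (α q).2.1 (A.mul_mem (hγmem e) (hγmem e'))
  obtain ⟨Ψ, hΨ⟩ := exists_map_mulC_tmul_eq ((A.Z p).subtype ∘ₗ α) αsq hαsq E γ
  have d_comp_Φ : A.d ∘ₗ Φ = (-1 : ℚ) ^ p • (Ψ ∘ₗ m ∘ₗ ι) := by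
    refine LinearMap.ext_on span_tmul_wdg_eq_top ?_
    rintro _ ⟨q, e, e', rfl⟩
    calc A.d (Φ (q ⊗ₜ[ℚ] wdg E e e'))
        = (-1 : ℚ) ^ p • ((α q : A.carrier) * (αsq e * γ e' - αsq e' * γ e)) := by
          rw [hΦ, DGA.d_mul_of_mem_Z (α q).2, DGA.d_mul_of_odd hk hk (hγmem e) (hγmem e'),
            hγd, hγd]
      _ = (-1 : ℚ) ^ p • Ψ (m (ι (q ⊗ₜ[ℚ] wdg E e e'))) := by
          simp only [hι, hm, map_sub, hΨ, mul_sub, mul_assoc, LinearMap.comp_apply,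
            Submodule.subtype_apply]
  refine ⟨Φ_mem Submodule.mem_top, LinearMap.mem_ker.2 ?_⟩
  simpa [ht] using LinearMap.congr_fun d_comp_Φ t

/-- **Proposition 2.3.** Let `A` be a DGA over `ℚ` with a cochain choice `(α, γ)`:
`α : H² → Z²` is a linear right inverse of the projection and `γ : E → A³` satisfies
`dγ = α²|_E`, where `E ⊆ P²H²` is the kernel of the cup product map `P²H² → H⁴`.
Then the map `αγ² : H² ⊗ Λ²E → A⁸`, `q ⊗ (e ∧ f) ↦ α(q)γ(e)γ(f)`, takes values in the
subspace `Z⁸` of closed elements when restricted to `D = (H² ⊗ Λ²E) ∩ R(H²)`. -/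
theorem alpha_gamma_sq_closed_on_D (A : DGA)
    (cup : SqM (A.H 2) →ₗ[ℚ] A.H 4)
    (hcup : ∀ (x y : A.Z 2) (w : A.Z 4),
      (w : A.carrier) = (x : A.carrier) * (y : A.carrier) →
      cup (sqm (A.H 2) (A.pr 2 x) (A.pr 2 y)) = A.pr 4 w)
    (m : (A.H 2 ⊗[ℚ] AltM (SqM (A.H 2))) →ₗ[ℚ] (CubM (A.H 2) ⊗[ℚ] SqM (A.H 2)))
    (hm : ∀ (q : A.H 2) (u v : SqM (A.H 2)),
      m (q ⊗ₜ[ℚ] wdg (SqM (A.H 2)) u v)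
        = mulC (A.H 2) q u ⊗ₜ[ℚ] v - mulC (A.H 2) q v ⊗ₜ[ℚ] u)
    (ι : (A.H 2 ⊗[ℚ] AltM ↥(LinearMap.ker cup)) →ₗ[ℚ] (A.H 2 ⊗[ℚ] AltM (SqM (A.H 2))))
    (hι : ∀ (q : A.H 2) (e e' : ↥(LinearMap.ker cup)),
      ι (q ⊗ₜ[ℚ] wdg ↥(LinearMap.ker cup) e e')
        = q ⊗ₜ[ℚ] wdg (SqM (A.H 2)) (e : SqM (A.H 2)) (e' : SqM (A.H 2)))
    (α : A.H 2 →ₗ[ℚ] A.Z 2) (hα : ∀ h, A.pr 2 (α h) = h)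
    (αsq : SqM (A.H 2) →ₗ[ℚ] A.Z 4)
    (hαsq : ∀ (x y : A.H 2) (w : A.Z 4),
      (w : A.carrier) = (α x : A.carrier) * (α y : A.carrier) →
      αsq (sqm (A.H 2) x y) = w)
    (γ : ↥(LinearMap.ker cup) →ₗ[ℚ] A.carrier)
    (hγmem : ∀ e, γ e ∈ A.grading 3)
    (hγd : ∀ e : ↥(LinearMap.ker cup), A.d (γ e) = (αsq (e : SqM (A.H 2)) : A.carrier))
    (Φ : (A.H 2 ⊗[ℚ] AltM ↥(LinearMap.ker cup)) →ₗ[ℚ] A.carrier)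
    (hΦ : ∀ (q : A.H 2) (e e' : ↥(LinearMap.ker cup)),
      Φ (q ⊗ₜ[ℚ] wdg ↥(LinearMap.ker cup) e e') = (α q : A.carrier) * (γ e * γ e')) :
    ∀ t : A.H 2 ⊗[ℚ] AltM ↥(LinearMap.ker cup), m (ι t) = 0 → Φ t ∈ A.Z 8 :=
  alpha_gamma_sq_closed_on_D_general A (by decide) (LinearMap.ker cup) m hm ι hι α
    ((A.Z 4).subtype ∘ₗ αsq)
    (fun x y => congrArg Subtype.val (hαsq x y ⟨_, DGA.mul_mem_Z (α x).2 (α y).2⟩ rfl))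
    γ hγmem hγd Φ hΦ

end
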